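/- arXiv:2108.09799 — 5 statements merged into one kernel-verified Lean document; each statement's English description precedes it below -/
import Mathlib

section
/- Let x0 < x1 be real, let ζ : ℝ → ℝ be measurable with ζmin ≤ ζ(x) ≤ ζmax for almost every x ∈ (x0, x1), where 0 < ζmin ≤ ζmax < ∞, and let ζ₀, ζ₁ be real numbers with ζ₀ ≥ ζmin and ζ₁ ≥ ζmin. Let ν > 0 and η ∈ ℝ, and let ω = a + i·b ∈ ℂ with a ∈ ℝ and b ≥ 0. Suppose u, v : ℝ → ℂ are such that v is integrable on (x0, x1), u(x) = u(x0) + ∫_{x0}^{x} v(s) ds for all x ∈ [x0, x1], and u, v are square-integrable on (x0, x1). Define a(u,u) = −∫_{x0}^{x1} ζ·|u|² − ∫_{x0}^{x1} ζ·|v|² + i·ω·( ζ₀·|u(x0)|² + ζ₁·(ν + i·η)·|u(x1)|² ). Then |a(u,u)| ≥ c · ( ∫_{x0}^{x1} |u|² + ∫_{x0}^{x1} |v|² ), where c = (ζmin/2)·min{1, ν/|η|} if η ≠ 0, and c = ζmin/2 if η = 0. -/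
open MeasureTheory

/-!
Write `κ = ν + iη`, `S = ⟨ζu,u⟩ + ⟨ζu′,u′⟩`, `p = ζ₀|u(x0)|²` and `q = ζ₁|u(x1)|²`, so that
`-a_1^ω(u,u) = S - iω(p + κq)`. Its real part is at least `S` when `Re ω · Im κ ≥ 0`. Otherwise
multiply by `conj κ`, which turns the coefficients of `p` and `q` into `-iω conj κ` and `-iω|κ|²`,
both of nonnegative real part, so that the real part is at least `Re κ · S`. Either way
`|a_1^ω(u,u)| ≥ (Re κ / |κ|) S`, and `|κ| ≤ 2 max(ν, |η|)` gives the constant `c`.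
-/

lemma mul_integral_le_integral_mul_of_mem_Icc {X : Type*} [MeasurableSpace X] {μ : Measure X}
    {ζ f : X → ℝ} {m M : ℝ}
    (hζ : AEStronglyMeasurable ζ μ) (hmem : ∀ᵐ x ∂μ, ζ x ∈ Set.Icc m M)
    (hf : Integrable f μ) (hf0 : 0 ≤ᵐ[μ] f) :
    m * ∫ x, f x ∂μ ≤ ∫ x, ζ x * f x ∂μ := by
  have hζf : Integrable (fun x => ζ x * f x) μ := by
    refine hf.bdd_mul (c := max |m| |M|) hζ ?_
    filter_upwards [hmem] with x hx
    exact abs_le_max_abs_abs hx.1 hx.2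
  rw [← integral_const_mul]
  refine integral_mono_ae (hf.const_mul m) hζf ?_
  filter_upwards [hmem, hf0] with x hx hfx
  exact mul_le_mul_of_nonneg_right hx.1 hfx

section BoundaryTerm

variable {κ ω : ℂ} {p q : ℝ}

lemma le_re_sub_I_mul_of_nonneg (S : ℝ) (hp : 0 ≤ p) (hq : 0 ≤ q) (hκ : 0 ≤ κ.re)
    (hω : 0 ≤ ω.im) (h : 0 ≤ ω.re * κ.im) :
    S ≤ ((S : ℂ) - Complex.I * ω * (p + κ * q)).re := by
  have hre : ((S : ℂ) - Complex.I * ω * (p + κ * q)).re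
      = S + ω.im * p + (ω.im * κ.re + ω.re * κ.im) * q := by
    simp only [Complex.mul_re, Complex.mul_im, Complex.sub_re, Complex.add_re, Complex.add_im,
      Complex.ofReal_re, Complex.ofReal_im, Complex.I_re, Complex.I_im]
    ring
  rw [hre, add_assoc]
  exact le_add_of_nonneg_right (by positivity)

lemma re_mul_le_re_conj_mul_sub_I_mul_of_nonpos (S : ℝ) (hp : 0 ≤ p) (hq : 0 ≤ q)
    (hκ : 0 ≤ κ.re) (hω : 0 ≤ ω.im) (h : ω.re * κ.im ≤ 0) :
    κ.re * S ≤ (starRingEnd ℂ κ * ((S : ℂ) - Complex.I * ω * (p + κ * q))).re := by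
  have hre : (starRingEnd ℂ κ * ((S : ℂ) - Complex.I * ω * (p + κ * q))).re
      = κ.re * S + (ω.im * κ.re - ω.re * κ.im) * p + ω.im * (κ.re ^ 2 + κ.im ^ 2) * q := by
    simp only [Complex.mul_re, Complex.mul_im, Complex.sub_re, Complex.add_re, Complex.add_im,
      Complex.ofReal_re, Complex.ofReal_im, Complex.I_re, Complex.I_im, Complex.conj_re,
      Complex.conj_im, Complex.sub_im]
    ring
  have hp_coeff : 0 ≤ ω.im * κ.re - ω.re * κ.im := sub_nonneg.2 (h.trans (by positivity))
  rw [hre, add_assoc]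
  exact le_add_of_nonneg_right (by positivity)

lemma re_mul_le_norm_mul_norm_sub_I_mul (S : ℝ) (hp : 0 ≤ p) (hq : 0 ≤ q) (hκ : 0 ≤ κ.re)
    (hω : 0 ≤ ω.im) :
    κ.re * S ≤ ‖κ‖ * ‖(S : ℂ) - Complex.I * ω * (p + κ * q)‖ := by
  rcases le_total 0 (ω.re * κ.im) with h | h
  · have hS := (le_re_sub_I_mul_of_nonneg S hp hq hκ hω h).trans (Complex.re_le_norm _)
    exact (mul_le_mul_of_nonneg_left hS hκ).trans
      (mul_le_mul_of_nonneg_right (Complex.re_le_norm κ) (norm_nonneg _))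
  · rw [← Complex.norm_conj κ, ← norm_mul]
    exact (re_mul_le_re_conj_mul_sub_I_mul_of_nonpos S hp hq hκ hω h).trans
      (Complex.re_le_norm _)

end BoundaryTerm

lemma half_min_one_div_le_re_div_norm {κ : ℂ} (hre : 0 < κ.re) (him : κ.im ≠ 0) :
    1 / 2 * min 1 (κ.re / |κ.im|) ≤ κ.re / ‖κ‖ := by
  have him' : 0 < |κ.im| := abs_pos.2 him
  have hκ : 0 < ‖κ‖ := hre.trans_le (Complex.re_le_norm κ)
  have hmin_re : min 1 (κ.re / |κ.im|) * κ.re ≤ κ.re :=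
    mul_le_of_le_one_left hre.le (min_le_left _ _)
  have hmin_im : min 1 (κ.re / |κ.im|) * |κ.im| ≤ κ.re :=
    (le_div_iff₀ him').1 (min_le_right _ _)
  rw [le_div_iff₀ hκ]
  calc 1 / 2 * min 1 (κ.re / |κ.im|) * ‖κ‖
      ≤ 1 / 2 * min 1 (κ.re / |κ.im|) * (κ.re + |κ.im|) := by
        gcongr
        simpa only [abs_of_pos hre] using Complex.norm_le_abs_re_add_abs_im κ
    _ ≤ κ.re := by linarith

lemma ite_half_min_le_mul_re_div_norm {κ : ℂ} {m : ℝ} (hm : 0 ≤ m) (hre : 0 < κ.re) :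
    (if κ.im = 0 then m / 2 else m / 2 * min 1 (κ.re / |κ.im|)) ≤ m * (κ.re / ‖κ‖) := by
  split_ifs with him
  · have hnorm : ‖κ‖ = κ.re := by
      rw [← Complex.abs_re_eq_norm.2 him, abs_of_pos hre]
    rw [hnorm, div_self hre.ne']
    linarith
  · linarith [mul_le_mul_of_nonneg_left (half_min_one_div_le_re_div_norm hre him) hm]

theorem coercivity_a1_general {E : Type*} [NormedAddCommGroup E] [NormedSpace ℝ E]
    [CompleteSpace E] {x0 x1 : ℝ} {ζ : ℝ → ℝ} {ζmin ζmax : ℝ}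
    (hmeas : AEStronglyMeasurable ζ (volume.restrict (Set.Ioo x0 x1)))
    (hbound : ∀ᵐ x ∂(volume.restrict (Set.Ioo x0 x1)), ζ x ∈ Set.Icc ζmin ζmax)
    {ζ0 ζ1 : ℝ} (hζ0 : 0 ≤ ζ0) (hζ1 : 0 ≤ ζ1) {κ ω : ℂ} (hκ : 0 < κ.re) (hω : 0 ≤ ω.im)
    {u v : ℝ → E} (hv : IntegrableOn v (Set.Ioo x0 x1))
    (huv : ∀ x ∈ Set.Icc x0 x1, u x = u x0 + ∫ s in x0..x, v s)
    (hu2 : IntegrableOn (fun x => ‖u x‖ ^ 2) (Set.Ioo x0 x1))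
    (hv2 : IntegrableOn (fun x => ‖v x‖ ^ 2) (Set.Ioo x0 x1)) :
    ζmin * (κ.re / ‖κ‖) *
        ((∫ x in Set.Ioo x0 x1, ‖u x‖ ^ 2) + ∫ x in Set.Ioo x0 x1, ‖v x‖ ^ 2) ≤
      ‖-((∫ x in Set.Ioo x0 x1, ζ x * ‖u x‖ ^ 2 : ℝ) : ℂ)
        - ((∫ x in Set.Ioo x0 x1, ζ x * ‖v x‖ ^ 2 : ℝ) : ℂ)
        + Complex.I * ω * (((ζ0 * ‖u x0‖ ^ 2 : ℝ) : ℂ)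
          + (ζ1 : ℂ) * κ * ((‖u x1‖ ^ 2 : ℝ) : ℂ))‖ := by
  have weighted_bound {w : ℝ → E}
      (hw : IntegrableOn (fun x => ‖w x‖ ^ 2) (Set.Ioo x0 x1) volume) :
      ζmin * (∫ x in Set.Ioo x0 x1, ‖w x‖ ^ 2) ≤ ∫ x in Set.Ioo x0 x1, ζ x * ‖w x‖ ^ 2 :=
    mul_integral_le_integral_mul_of_mem_Icc hmeas hbound hw (ae_of_all _ fun x => sq_nonneg ‖w x‖)
  have hκ_norm : 0 < ‖κ‖ := hκ.trans_le (Complex.re_le_norm κ)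
  set S := (∫ x in Set.Ioo x0 x1, ζ x * ‖u x‖ ^ 2) + ∫ x in Set.Ioo x0 x1, ζ x * ‖v x‖ ^ 2
    with hS
  calc _ = κ.re / ‖κ‖ * (ζmin * (∫ x in Set.Ioo x0 x1, ‖u x‖ ^ 2)
          + ζmin * ∫ x in Set.Ioo x0 x1, ‖v x‖ ^ 2) := by ring
    _ ≤ κ.re / ‖κ‖ * S := by
        gcongr
        exact add_le_add (weighted_bound hu2) (weighted_bound hv2)
    _ ≤ ‖(S : ℂ) - Complex.I * ω *
          ((ζ0 * ‖u x0‖ ^ 2 : ℝ) + κ * (ζ1 * ‖u x1‖ ^ 2 : ℝ))‖ := by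
        rw [div_mul_eq_mul_div, div_le_iff₀' hκ_norm]
        exact re_mul_le_norm_mul_norm_sub_I_mul S (by positivity) (by positivity) hκ.le hω
    _ = _ := by
        rw [← norm_neg, hS]
        push_cast
        ring_nf

/-- Proposition (prop-bounded-coercive): coercivity of the sesquilinear form
`a_1^ω(u,u) = −⟨ζu,u⟩ − ⟨ζu′,u′⟩ + iω(ζ₀|u(x0)|² + ζ₁(ν+iη)|u(x1)|²)`
on `W^{1,2}((x0,x1))`, for `ω = a + ib` in the closed upper half plane. -/
theorem coercivity_a1
    (x0 x1 : ℝ) (hx : x0 < x1)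
    (ζ : ℝ → ℝ) (hmeas : Measurable ζ)
    (ζmin ζmax : ℝ) (hζmin : 0 < ζmin) (hζminmax : ζmin ≤ ζmax)
    (hbound : ∀ᵐ x ∂(volume.restrict (Set.Ioo x0 x1)), ζmin ≤ ζ x ∧ ζ x ≤ ζmax)
    (ζ0 ζ1 : ℝ) (hζ0 : ζmin ≤ ζ0) (hζ1 : ζmin ≤ ζ1)
    (ν η : ℝ) (hν : 0 < ν)
    (a b : ℝ) (hb : 0 ≤ b)
    (ω : ℂ) (hω : ω = (a : ℂ) + (b : ℂ) * Complex.I)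
    (u v : ℝ → ℂ)
    (hv : IntegrableOn v (Set.Ioo x0 x1))
    (huv : ∀ x ∈ Set.Icc x0 x1, u x = u x0 + ∫ s in x0..x, v s)
    (hu2 : IntegrableOn (fun x => ‖u x‖ ^ 2) (Set.Ioo x0 x1))
    (hv2 : IntegrableOn (fun x => ‖v x‖ ^ 2) (Set.Ioo x0 x1))
    (A : ℂ)
    (hA : A = -(((∫ x in Set.Ioo x0 x1, ζ x * ‖u x‖ ^ 2) : ℝ) : ℂ)
              - (((∫ x in Set.Ioo x0 x1, ζ x * ‖v x‖ ^ 2) : ℝ) : ℂ)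
              + Complex.I * ω *
                ((((ζ0 * ‖u x0‖ ^ 2) : ℝ) : ℂ)
                  + (ζ1 : ℂ) * ((ν : ℂ) + Complex.I * (η : ℂ)) * ((‖u x1‖ ^ 2 : ℝ) : ℂ)))
    (c : ℝ)
    (hc : c = if η = 0 then ζmin / 2 else (ζmin / 2) * min 1 (ν / |η|)) :
    c * ((∫ x in Set.Ioo x0 x1, ‖u x‖ ^ 2) + ∫ x in Set.Ioo x0 x1, ‖v x‖ ^ 2) ≤ ‖A‖ := by
  have hκre : ((ν : ℂ) + Complex.I * η).re = ν := by simp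
  have hκim : ((ν : ℂ) + Complex.I * η).im = η := by simp
  have hκ : 0 < ((ν : ℂ) + Complex.I * η).re := by rwa [hκre]
  have hωim : 0 ≤ ω.im := by simpa [hω] using hb
  have hc_le := ite_half_min_le_mul_re_div_norm hζmin.le hκ
  rw [hκim, hκre, ← hc] at hc_le
  have hcoercive := coercivity_a1_general hmeas.aestronglyMeasurable hbound
    (hζmin.le.trans hζ0) (hζmin.le.trans hζ1) hκ hωim hv huv hu2 hv2
  rw [← hA, hκre] at hcoercive
  exact (mul_le_mul_of_nonneg_right hc_le (by positivity)).trans hcoercive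
end

section
/- Let n ≥ 1 and r_1, …, r_n ∈ (−1, 1), and let Φ_j, Φ_j^*, Ψ_j, Ψ_j^* be the associated orthogonal polynomials on the unit circle. For z ∈ ℂ with |z| = 1 and 1 ≤ j ≤ n let φ_j(w) = z·(w + r_j)/(1 + r_j·w). Then Ψ_n^*(z) + Φ_n^*(z) ≠ 0 and (φ_1 ∘ φ_2 ∘ ⋯ ∘ φ_n)(0) = ( Ψ_n^*(z) − Φ_n^*(z) ) / ( Ψ_n^*(z) + Φ_n^*(z) ). -/
/-- The monic orthogonal polynomials on the unit circle with Verblunsky coefficients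
`r 1, …, r n`, together with their duals: `(opucPhi r j).1 = Φ_j`, `(opucPhi r j).2 = Φ_j^*`. -/
noncomputable def opucPhi (r : ℕ → ℝ) : ℕ → (ℂ → ℂ) × (ℂ → ℂ)
  | 0 => (fun _ => 1, fun _ => 1)
  | j + 1 =>
      (fun z => z * (opucPhi r j).1 z - (r (j + 1) : ℂ) * (opucPhi r j).2 z,
       fun z => (opucPhi r j).2 z - (r (j + 1) : ℂ) * z * (opucPhi r j).1 z)

/-- The associated monic orthogonal polynomials with Verblunsky coefficients
`-r 1, …, -r n`, together with their duals: `(opucPsi r j).1 = Ψ_j`, `(opucPsi r j).2 = Ψ_j^*`. -/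
noncomputable def opucPsi (r : ℕ → ℝ) : ℕ → (ℂ → ℂ) × (ℂ → ℂ)
  | 0 => (fun _ => 1, fun _ => 1)
  | j + 1 =>
      (fun z => z * (opucPsi r j).1 z + (r (j + 1) : ℂ) * (opucPsi r j).2 z,
       fun z => (opucPsi r j).2 z + (r (j + 1) : ℂ) * z * (opucPsi r j).1 z)

/-!
Each `φ_j` is the Möbius transformation of the matrix `!![z, z * r_j; r_j, 1]`, and the recursions
for `Φ` and `Ψ` say that `2⁻¹ • !![Ψ_n + Φ_n, Ψ_n^* - Φ_n^*; Ψ_n - Φ_n, Ψ_n^* + Φ_n^*]` is the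
product of these matrices. For `‖z‖ ≤ 1` every `φ_j` maps the open unit disk into itself and has no
pole there, so on the disk the composition may be computed by multiplying matrices; evaluating at
`0` leaves the quotient of the entries of the last column.
-/

open ComplexConjugate

theorem norm_one_add_conj_mul_sq_sub_norm_add_sq {K : Type*} [RCLike K] (t w : K) :
    ‖1 + conj t * w‖ ^ 2 - ‖w + t‖ ^ 2 = (1 - ‖t‖ ^ 2) * (1 - ‖w‖ ^ 2) := by
  have hre : RCLike.re (w * conj t) = RCLike.re (t * conj w) := by
    rw [← RCLike.conj_re, map_mul, RCLike.conj_conj, mul_comm]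
  simp only [← RCLike.normSq_eq_def', RCLike.normSq_add, map_mul, map_one, RCLike.conj_conj,
    RCLike.normSq_conj, one_mul, hre]
  ring

theorem norm_add_lt_norm_one_add_conj_mul {K : Type*} [RCLike K] {t w : K}
    (ht : ‖t‖ < 1) (hw : ‖w‖ < 1) : ‖w + t‖ < ‖1 + conj t * w‖ := by
  have ht_sq : 0 < 1 - ‖t‖ ^ 2 := sub_pos.2 (pow_lt_one₀ (norm_nonneg t) ht two_ne_zero)
  have hw_sq : 0 < 1 - ‖w‖ ^ 2 := sub_pos.2 (pow_lt_one₀ (norm_nonneg w) hw two_ne_zero)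
  refine lt_of_pow_lt_pow_left₀ 2 (norm_nonneg _) (sub_pos.1 ?_)
  rw [norm_one_add_conj_mul_sq_sub_norm_add_sq]
  exact mul_pos ht_sq hw_sq

/-- The scattering map `φ_j` of a layer with reflection coefficient `t = r_j`, where `z` is the
phase factor acquired in crossing the layer. -/
noncomputable def layerReflection (z : ℂ) (t : ℝ) (w : ℂ) : ℂ :=
  z * (w + t) / (1 + t * w)

section layerReflection

variable {z w : ℂ} {t : ℝ}

theorem norm_add_ofReal_lt_norm_one_add_ofReal_mul (ht : |t| < 1) (hw : ‖w‖ < 1) :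
    ‖w + t‖ < ‖1 + t * w‖ := by
  have ht_norm : ‖(t : ℂ)‖ < 1 := by rwa [Complex.norm_real, Real.norm_eq_abs]
  simpa only [Complex.conj_ofReal] using norm_add_lt_norm_one_add_conj_mul ht_norm hw

theorem one_add_ofReal_mul_ne_zero (ht : |t| < 1) (hw : ‖w‖ < 1) : 1 + t * w ≠ 0 :=
  norm_pos_iff.1 ((norm_nonneg _).trans_lt (norm_add_ofReal_lt_norm_one_add_ofReal_mul ht hw))

theorem norm_layerReflection_lt_one (hz : ‖z‖ ≤ 1) (ht : |t| < 1) (hw : ‖w‖ < 1) :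
    ‖layerReflection z t w‖ < 1 := by
  rw [layerReflection, norm_div, norm_mul,
    div_lt_one (norm_pos_iff.2 (one_add_ofReal_mul_ne_zero ht hw))]
  exact (mul_le_of_le_one_left (norm_nonneg _) hz).trans_lt
    (norm_add_ofReal_lt_norm_one_add_ofReal_mul ht hw)

theorem layerReflection_mul_one_add (h : 1 + t * w ≠ 0) :
    layerReflection z t w * (1 + t * w) = z * (w + t) :=
  div_mul_cancel₀ _ h

end layerReflection

/-- Twice the numerator of `φ_1 ∘ ⋯ ∘ φ_n` at `w`, as the Möbius transformation of the product of
the matrices of the `φ_j`. -/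
noncomputable def opucNum (r : ℕ → ℝ) (n : ℕ) (z w : ℂ) : ℂ :=
  ((opucPsi r n).1 z + (opucPhi r n).1 z) * w + ((opucPsi r n).2 z - (opucPhi r n).2 z)

/-- Twice the denominator of `φ_1 ∘ ⋯ ∘ φ_n` at `w`, as the Möbius transformation of the product of
the matrices of the `φ_j`. -/
noncomputable def opucDen (r : ℕ → ℝ) (n : ℕ) (z w : ℂ) : ℂ :=
  ((opucPsi r n).1 z - (opucPhi r n).1 z) * w + ((opucPsi r n).2 z + (opucPhi r n).2 z)

section opuc

variable {r : ℕ → ℝ} {n : ℕ} {z w : ℂ}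

theorem opucNum_succ (h : 1 + r (n + 1) * w ≠ 0) :
    opucNum r (n + 1) z w =
      opucNum r n z (layerReflection z (r (n + 1)) w) * (1 + r (n + 1) * w) := by
  simp only [opucNum, opucPsi, opucPhi]
  linear_combination
    -((opucPsi r n).1 z + (opucPhi r n).1 z) * layerReflection_mul_one_add (z := z) h

theorem opucDen_succ (h : 1 + r (n + 1) * w ≠ 0) :
    opucDen r (n + 1) z w =
      opucDen r n z (layerReflection z (r (n + 1)) w) * (1 + r (n + 1) * w) := by
  simp only [opucDen, opucPsi, opucPhi]
  linear_combination
    -((opucPsi r n).1 z - (opucPhi r n).1 z) * layerReflection_mul_one_add (z := z) h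

theorem opucDen_ne_zero (hr : ∀ j, 1 ≤ j → j ≤ n → |r j| < 1) (hz : ‖z‖ ≤ 1) (hw : ‖w‖ < 1) :
    opucDen r n z w ≠ 0 := by
  induction n generalizing w with
  | zero => norm_num [opucDen, opucPsi, opucPhi]
  | succ n ih =>
    have hrn : |r (n + 1)| < 1 := hr (n + 1) n.succ_pos le_rfl
    have hpole : 1 + r (n + 1) * w ≠ 0 := one_add_ofReal_mul_ne_zero hrn hw
    rw [opucDen_succ hpole]
    exact mul_ne_zero (ih (fun j hj hjn => hr j hj (hjn.trans n.le_succ))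
      (norm_layerReflection_lt_one hz hrn hw)) hpole

theorem foldr_layerReflection (hr : ∀ j, 1 ≤ j → j ≤ n → |r j| < 1) (hz : ‖z‖ ≤ 1)
    (hw : ‖w‖ < 1) :
    (List.ofFn fun j : Fin n => (j : ℕ) + 1).foldr (fun k => layerReflection z (r k)) w =
      opucNum r n z w / opucDen r n z w := by
  induction n generalizing w with
  | zero => norm_num [opucNum, opucDen, opucPsi, opucPhi]
  | succ n ih =>
    have hrn : |r (n + 1)| < 1 := hr (n + 1) n.succ_pos le_rfl
    have hpole : 1 + r (n + 1) * w ≠ 0 := one_add_ofReal_mul_ne_zero hrn hw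
    simp only [List.ofFn_succ_last, List.foldr_append, List.foldr_cons, List.foldr_nil,
      Fin.val_castSucc, Fin.val_last]
    rw [ih (fun j hj hjn => hr j hj (hjn.trans n.le_succ))
        (norm_layerReflection_lt_one hz hrn hw),
      opucNum_succ hpole, opucDen_succ hpole, mul_div_mul_right _ _ hpole]

end opuc

theorem opuc_reflection_representation_general
    (n : ℕ) (r : ℕ → ℝ)
    (hr : ∀ j, 1 ≤ j → j ≤ n → r j ∈ Set.Ioo (-1 : ℝ) 1)
    (z : ℂ) (hz : ‖z‖ ≤ 1) :
    (opucPsi r n).2 z + (opucPhi r n).2 z ≠ 0 ∧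
      (List.ofFn fun j : Fin n => (j : ℕ) + 1).foldr
          (fun k w => z * (w + (r k : ℂ)) / (1 + (r k : ℂ) * w)) 0
        = ((opucPsi r n).2 z - (opucPhi r n).2 z) / ((opucPsi r n).2 z + (opucPhi r n).2 z) := by
  have hr_abs : ∀ j, 1 ≤ j → j ≤ n → |r j| < 1 := fun j hj hjn => abs_lt.2 (hr j hj hjn)
  have h0 : ‖(0 : ℂ)‖ < 1 := norm_zero.trans_lt one_pos
  have hden := opucDen_ne_zero hr_abs hz h0
  have hfold := foldr_layerReflection hr_abs hz h0
  simp only [opucNum, opucDen, mul_zero, zero_add] at hden hfold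
  exact ⟨hden, hfold⟩

/-- OPUC representation of the reflection coefficient of an equally-spaced step
medium (Proposition prop-opuc(iv) + prop-step-composition):
`(φ_1 ∘ ⋯ ∘ φ_n)(0) = (Ψ_n^*(z) − Φ_n^*(z)) / (Ψ_n^*(z) + Φ_n^*(z))` for `|z| = 1`,
where `φ_j(w) = z(w + r_j)/(1 + r_j w)`. -/
theorem opuc_reflection_representation
    (n : ℕ) (hn : 1 ≤ n) (r : ℕ → ℝ)
    (hr : ∀ j, 1 ≤ j → j ≤ n → r j ∈ Set.Ioo (-1 : ℝ) 1)
    (z : ℂ) (hz : ‖z‖ = 1) :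
    (opucPsi r n).2 z + (opucPhi r n).2 z ≠ 0 ∧
      (List.ofFn fun j : Fin n => (j : ℕ) + 1).foldr
          (fun k w => z * (w + (r k : ℂ)) / (1 + (r k : ℂ) * w)) 0
        = ((opucPsi r n).2 z - (opucPhi r n).2 z) / ((opucPsi r n).2 z + (opucPhi r n).2 z) :=
  opuc_reflection_representation_general n r hr z hz.le
end

section
/- Let n ≥ 0 and r_1, …, r_n ∈ (−1, 1), and let Φ_j, Φ_j^*, Ψ_j, Ψ_j^* be the associated orthogonal polynomials on the unit circle. Then for every 0 ≤ j ≤ n and every z ∈ ℂ with |z| ≤ 1: Ψ_j^*(z) + Φ_j^*(z) ≠ 0 and | Ψ_j(z) − Φ_j(z) | < | Ψ_j^*(z) + Φ_j^*(z) |. -/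
/-!
The differences `D_j = Ψ_j - Φ_j` and the sums `S_j = Ψ_j^* + Φ_j^*` satisfy a recursion of their
own: `(z D_j, S_j)` is sent to `(D_{j+1}, S_{j+1})` by the matrix `!![1, r; r, 1]` with
`r = r_{j+1}`. This matrix multiplies the indefinite form `‖S‖ ^ 2 - ‖D‖ ^ 2` by `1 - r ^ 2 > 0`,
and multiplying `D_j` by `z` in the closed unit disk does not decrease that form, so it stays
positive from its initial value `4` on.
-/

section InnerProductSpace

open scoped ComplexConjugate

variable {𝕜 E : Type*} [RCLike 𝕜] [SeminormedAddCommGroup E] [InnerProductSpace 𝕜 E]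

theorem norm_add_conj_smul_sq_sub_norm_add_smul_sq (a : 𝕜) (x y : E) :
    ‖y + conj a • x‖ ^ 2 - ‖x + a • y‖ ^ 2 = (1 - ‖a‖ ^ 2) * (‖y‖ ^ 2 - ‖x‖ ^ 2) := by
  have cross_terms_eq : RCLike.re (inner 𝕜 y (conj a • x)) = RCLike.re (inner 𝕜 x (a • y)) := by
    rw [inner_re_symm x, inner_smul_left, inner_smul_right]
  rw [norm_add_sq (𝕜 := 𝕜), norm_add_sq (𝕜 := 𝕜), cross_terms_eq, norm_smul, norm_smul,
    RCLike.norm_conj]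
  ring

theorem norm_add_smul_lt_norm_add_conj_smul_iff {a : 𝕜} (ha : ‖a‖ < 1) {x y : E} :
    ‖x + a • y‖ < ‖y + conj a • x‖ ↔ ‖x‖ < ‖y‖ := by
  have factor_pos : 0 < 1 - ‖a‖ ^ 2 :=
    sub_pos.2 (pow_lt_one₀ (norm_nonneg a) ha two_ne_zero)
  rw [← sq_lt_sq₀ (norm_nonneg _) (norm_nonneg _), ← sub_pos,
    norm_add_conj_smul_sq_sub_norm_add_smul_sq, mul_pos_iff_of_pos_left factor_pos, sub_pos,
    sq_lt_sq₀ (norm_nonneg _) (norm_nonneg _)]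

end InnerProductSpace

theorem opucPsi_fst_sub_opucPhi_fst_succ (r : ℕ → ℝ) (j : ℕ) (z : ℂ) :
    (opucPsi r (j + 1)).1 z - (opucPhi r (j + 1)).1 z =
      z * ((opucPsi r j).1 z - (opucPhi r j).1 z) +
        (r (j + 1) : ℂ) * ((opucPsi r j).2 z + (opucPhi r j).2 z) := by
  simp only [opucPsi, opucPhi]
  ring

theorem opucPsi_snd_add_opucPhi_snd_succ (r : ℕ → ℝ) (j : ℕ) (z : ℂ) :
    (opucPsi r (j + 1)).2 z + (opucPhi r (j + 1)).2 z =
      ((opucPsi r j).2 z + (opucPhi r j).2 z) +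
        (r (j + 1) : ℂ) * (z * ((opucPsi r j).1 z - (opucPhi r j).1 z)) := by
  simp only [opucPsi, opucPhi]
  ring

theorem norm_opucPsi_fst_sub_opucPhi_fst_lt {r : ℕ → ℝ} {j : ℕ} (hr : ∀ i < j, |r (i + 1)| < 1)
    {z : ℂ} (hz : ‖z‖ ≤ 1) :
    ‖(opucPsi r j).1 z - (opucPhi r j).1 z‖ < ‖(opucPsi r j).2 z + (opucPhi r j).2 z‖ := by
  induction j with
  | zero => norm_num [opucPsi, opucPhi]
  | succ j ih =>
    have norm_coeff_lt : ‖(r (j + 1) : ℂ)‖ < 1 := by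
      simpa only [Complex.norm_real, Real.norm_eq_abs] using hr j j.lt_succ_self
    have norm_mul_lt : ‖z * ((opucPsi r j).1 z - (opucPhi r j).1 z)‖ <
        ‖(opucPsi r j).2 z + (opucPhi r j).2 z‖ :=
      calc
        _ = ‖z‖ * ‖(opucPsi r j).1 z - (opucPhi r j).1 z‖ := norm_mul _ _
        _ ≤ ‖(opucPsi r j).1 z - (opucPhi r j).1 z‖ := mul_le_of_le_one_left (norm_nonneg _) hz
        _ < _ := ih fun i hi => hr i (hi.trans j.lt_succ_self)
    rw [opucPsi_fst_sub_opucPhi_fst_succ, opucPsi_snd_add_opucPhi_snd_succ]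
    simpa only [smul_eq_mul, Complex.conj_ofReal] using
      (norm_add_smul_lt_norm_add_conj_smul_iff norm_coeff_lt).2 norm_mul_lt

/-- The subsidiary claim (transmission-outer) of Proposition prop-opuc(v):
for `0 ≤ j ≤ n` and `|z| ≤ 1`, `Ψ_j^*(z) + Φ_j^*(z) ≠ 0` and
`|Ψ_j(z) − Φ_j(z)| < |Ψ_j^*(z) + Φ_j^*(z)|`. -/
theorem opuc_transmission_outer
    (n : ℕ) (r : ℕ → ℝ)
    (hr : ∀ j, 1 ≤ j → j ≤ n → r j ∈ Set.Ioo (-1 : ℝ) 1) :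
    ∀ j ≤ n, ∀ z : ℂ, ‖z‖ ≤ 1 →
      (opucPsi r j).2 z + (opucPhi r j).2 z ≠ 0 ∧
        ‖(opucPsi r j).1 z - (opucPhi r j).1 z‖ < ‖(opucPsi r j).2 z + (opucPhi r j).2 z‖ := by
  intro j hj z hz
  have norm_lt : ‖(opucPsi r j).1 z - (opucPhi r j).1 z‖ <
      ‖(opucPsi r j).2 z + (opucPhi r j).2 z‖ :=
    norm_opucPsi_fst_sub_opucPhi_fst_lt
      (fun i hi => abs_lt.2 (hr (i + 1) (Nat.le_add_left 1 i) (hi.trans_le hj))) hz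
  exact ⟨norm_pos_iff.1 ((norm_nonneg _).trans_lt norm_lt), norm_lt⟩
end

section
/- Fix real numbers x0 < x1 and y ∈ (x0, x1], and let α : ℝ → ℝ be Lebesgue integrable on (x0, x1). Then E_α^{(x0,y)}(0) = exp( ∫_{x0}^{y} α ). -/
/-! At `ω = 0` the exponential weight is `1` and the iterates are real, so the conjugation in `A_ω`
is invisible and the `j`-th iterate is the iterated integral `F ^ j / j!` of the primitive
`F t = ∫ s in x0..t, α s`. Since `α` is merely integrable, `F` need not be differentiable
everywhere; it is absolutely continuous, and so are its powers, which is enough for the fundamental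
theorem of calculus to give `∫ α F ^ j = F ^ (j + 1) / (j + 1)`. Summing over `j` yields the
exponential series of `F y`. -/

open MeasureTheory

/-- The iterates `A_ω^j 𝟙` of the conjugate-linear Volterra operator
`A_ω f(t) = ∫_{x0}^t α(s) e^{2i(s−x0)ω} conj(f(s)) ds`. -/
noncomputable def Aiter (x0 : ℝ) (α : ℝ → ℝ) (ω : ℂ) : ℕ → ℝ → ℂ
  | 0 => fun _ => 1
  | j + 1 => fun t =>
      ∫ s in x0..t,
        (α s : ℂ) * Complex.exp (2 * Complex.I * ((s : ℂ) - (x0 : ℂ)) * ω)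
          * (starRingEnd ℂ) (Aiter x0 α ω j s)

/-- The harmonic exponential `E_α^{(x0,y)}(ω) = Σ_{j≥0} A_ω^j 𝟙(y)`. -/
noncomputable def harmE (x0 y : ℝ) (α : ℝ → ℝ) (ω : ℂ) : ℂ :=
  ∑' j : ℕ, Aiter x0 α ω j y

section PowerRule

variable {f : ℝ → ℝ} {a b : ℝ}

lemma absolutelyContinuousOnInterval_pow (hf : AbsolutelyContinuousOnInterval f a b) (n : ℕ) :
    AbsolutelyContinuousOnInterval (fun x ↦ f x ^ n) a b := by
  induction n with
  | zero =>
    simpa only [pow_zero] using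
      (LipschitzWith.const (1 : ℝ)).lipschitzOnWith.absolutelyContinuousOnInterval
  | succ n ih => simpa only [pow_succ] using ih.fun_mul hf

lemma integral_deriv_mul_pow_of_absolutelyContinuousOnInterval
    (hf : AbsolutelyContinuousOnInterval f a b) (n : ℕ) :
    ∫ x in a..b, deriv f x * f x ^ n = (f b ^ (n + 1) - f a ^ (n + 1)) / (n + 1) := by
  have deriv_pow_succ : ∀ᵐ x, x ∈ Set.uIoc a b →
      deriv (fun x ↦ f x ^ (n + 1)) x = (n + 1) * (deriv f x * f x ^ n) := by
    filter_upwards [hf.ae_differentiableAt] with x hx hmem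
    rw [deriv_fun_pow (hx (Set.uIoc_subset_uIcc hmem)), Nat.add_sub_cancel]
    push_cast
    ring
  rw [eq_div_iff (by positivity), mul_comm, ← intervalIntegral.integral_const_mul,
    ← intervalIntegral.integral_congr_ae deriv_pow_succ]
  exact (absolutelyContinuousOnInterval_pow hf (n + 1)).integral_deriv_eq_sub

lemma integral_mul_integral_pow (hf : IntervalIntegrable f volume a b) (n : ℕ) :
    ∫ x in a..b, f x * (∫ t in a..x, f t) ^ n = (∫ t in a..b, f t) ^ (n + 1) / (n + 1) := by
  have ftc : ∀ᵐ x, x ∈ Set.uIoc a b →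
      f x * (∫ t in a..x, f t) ^ n =
        deriv (fun x ↦ ∫ t in a..x, f t) x * (∫ t in a..x, f t) ^ n := by
    filter_upwards [hf.ae_hasDerivAt_integral] with x hx hmem
    rw [(hx (Set.uIoc_subset_uIcc hmem) a Set.left_mem_uIcc).deriv]
  rw [intervalIntegral.integral_congr_ae ftc,
    integral_deriv_mul_pow_of_absolutelyContinuousOnInterval
      (hf.absolutelyContinuousOnInterval_intervalIntegral Set.left_mem_uIcc)]
  simp

end PowerRule

section IteratesAtZero

variable {x0 : ℝ} {α : ℝ → ℝ}

lemma Aiter_zero_succ (j : ℕ) (t : ℝ) :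
    Aiter x0 α 0 (j + 1) t = ∫ s in x0..t, (α s : ℂ) * starRingEnd ℂ (Aiter x0 α 0 j s) := by
  simp [Aiter]

lemma Aiter_zero_eq_integral_pow_div_factorial {t : ℝ} (hα : IntervalIntegrable α volume x0 t)
    (j : ℕ) :
    Aiter x0 α 0 j t = (((∫ s in x0..t, α s) ^ j / j.factorial : ℝ) : ℂ) := by
  induction j generalizing t with
  | zero => simp [Aiter]
  | succ j ih =>
    have integrand_eq : Set.EqOn (fun s ↦ (α s : ℂ) * starRingEnd ℂ (Aiter x0 α 0 j s))
        (fun s ↦ ((α s * (∫ r in x0..s, α r) ^ j / j.factorial : ℝ) : ℂ)) (Set.uIcc x0 t) := by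
      intro s hs
      have hαs := hα.mono_set (Set.uIcc_subset_uIcc_left hs)
      simp only [ih hαs, Complex.conj_ofReal, ← Complex.ofReal_mul, mul_div_assoc]
    rw [Aiter_zero_succ, intervalIntegral.integral_congr integrand_eq,
      intervalIntegral.integral_ofReal, intervalIntegral.integral_div,
      integral_mul_integral_pow hα, div_div, Nat.factorial_succ,
      Nat.cast_mul, Nat.cast_succ]

theorem harmonic_exponential_at_zero_general {y : ℝ} (hα : IntervalIntegrable α volume x0 y) :
    HasSum (fun j ↦ Aiter x0 α 0 j y) (Complex.exp ((∫ s in x0..y, α s : ℝ) : ℂ)) := by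
  simp only [Aiter_zero_eq_integral_pow_div_factorial hα, Complex.ofReal_div, Complex.ofReal_pow,
    Complex.ofReal_natCast, Complex.exp_eq_exp_ℂ]
  exact NormedSpace.expSeries_div_hasSum_exp _

end IteratesAtZero

/-- Proposition (prop-harmonic-at-zero): `E_α^{(x0,y)}(0) = exp(∫_{x0}^y α)`. -/
theorem harmonic_exponential_at_zero
    (x0 x1 y : ℝ) (hx : x0 < x1) (hy : y ∈ Set.Ioc x0 x1)
    (α : ℝ → ℝ) (hα : IntegrableOn α (Set.Ioo x0 x1)) :
    harmE x0 y α 0 = Complex.exp (((∫ s in x0..y, α s) : ℝ) : ℂ) := by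
  have hαx1 : IntervalIntegrable α volume x0 x1 :=
    (intervalIntegrable_iff_integrableOn_Ioo_of_le hx.le).mpr hα
  have hαy : IntervalIntegrable α volume x0 y :=
    hαx1.mono_set (Set.uIcc_subset_uIcc_left (Set.Icc_subset_uIcc (Set.Ioc_subset_Icc_self hy)))
  exact (harmonic_exponential_at_zero_general hαy).tsum_eq
end

section
/- Fix real numbers x0 < x1 and y ∈ (x0, x1], and let α : ℝ → ℝ be Lebesgue integrable on (x0, x1). Then for every ω ∈ ℝ, the denominator E_α^{(x0,y)}(ω) + E_{−α}^{(x0,y)}(ω) is nonzero and | Th_α^{(x0,y)}(ω) | ≤ tanh( ∫_{x0}^{y} |α| ). -/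
open MeasureTheory

/-!
Since `A_ω` is linear in `α`, the even and odd parts `C` and `S` of its Neumann series satisfy
`E_{±α} = C ± S`, so `Th_α = S / C`. Shifting the series gives `C = 1 + ∫ g S̄` and `S = ∫ g C̄`,
where `g` is the kernel of `A_ω`. Both `(|C|²)'` and `(|S|²)'` are then `2 Re (g C̄ S̄)`, because
`A_ω` is conjugate-linear, so `|C|² - |S|²` keeps its initial value `1`. Hence `C ≠ 0` and `|S / C|`
is the increasing function `r / √(1 + r²)` of `r = |S|`, while `|A_ω^j 𝟙| ≤ (∫ |g|)^j / j!`,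
summed over odd `j`, gives `|S| ≤ sinh (∫ |g|)`.
-/

open Set
open scoped Nat ComplexConjugate

section AbsolutelyContinuous

variable {a b : ℝ}

lemma absolutelyContinuousOnInterval_of_dist_le {X Y : Type*} [PseudoMetricSpace X]
    [PseudoMetricSpace Y] {F : ℝ → X} {G : ℝ → Y} (hG : AbsolutelyContinuousOnInterval G a b)
    (hFG : ∀ x ∈ uIcc a b, ∀ y ∈ uIcc a b, dist (F x) (F y) ≤ dist (G x) (G y)) :
    AbsolutelyContinuousOnInterval F a b := by
  refine squeeze_zero' (.of_forall fun E => Finset.sum_nonneg fun _ _ => dist_nonneg) ?_ hG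
  filter_upwards [Filter.mem_inf_of_right (Filter.mem_principal_self _)] with E hE
  exact Finset.sum_le_sum fun i hi => hFG _ (hE.1 i hi).1 _ (hE.1 i hi).2

lemma absolutelyContinuousOnInterval_integral {E : Type*} [NormedAddCommGroup E]
    [NormedSpace ℝ E] {f : ℝ → E} (hf : IntervalIntegrable f volume a b) :
    AbsolutelyContinuousOnInterval (fun t => ∫ s in a..t, f s) a b := by
  refine absolutelyContinuousOnInterval_of_dist_le
    (hf.norm.absolutelyContinuousOnInterval_intervalIntegral left_mem_uIcc) fun x hx y hy => ?_
  have hfx : IntervalIntegrable f volume a x := hf.mono_set (uIcc_subset_uIcc_left hx)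
  have hfy : IntervalIntegrable f volume a y := hf.mono_set (uIcc_subset_uIcc_left hy)
  rw [dist_eq_norm, dist_eq_norm, intervalIntegral.integral_interval_sub_left hfx hfy,
    intervalIntegral.integral_interval_sub_left hfx.norm hfy.norm]
  exact intervalIntegral.norm_integral_le_abs_integral_norm

lemma absolutelyContinuousOnInterval_pow_s16 {M : ℝ → ℝ} (hM : AbsolutelyContinuousOnInterval M a b)
    (n : ℕ) : AbsolutelyContinuousOnInterval (fun t => M t ^ n) a b := by
  induction n with
  | zero => exact absolutelyContinuousOnInterval_of_dist_le hM fun x _ y _ => by simp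
  | succ n ih => simpa only [pow_succ] using ih.fun_mul hM

lemma integral_eq_sub_of_ae_hasDerivAt {F f : ℝ → ℝ} (hF : AbsolutelyContinuousOnInterval F a b)
    (hf : ∀ᵐ x, x ∈ uIcc a b → HasDerivAt F (f x) x) :
    ∫ x in a..b, f x = F b - F a := by
  rw [← hF.integral_deriv_eq_sub]
  refine intervalIntegral.integral_congr_ae ?_
  filter_upwards [hf] with x hx hxab
  exact (hx (uIoc_subset_uIcc hxab)).deriv.symm

lemma integral_mul_integral_pow_div_factorial {m : ℝ → ℝ} (hm : IntervalIntegrable m volume a b)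
    (n : ℕ) :
    ∫ s in a..b, m s * ((∫ u in a..s, m u) ^ n / n !) =
      (∫ u in a..b, m u) ^ (n + 1) / (n + 1)! := by
  have hF := (absolutelyContinuousOnInterval_pow_s16
    (absolutelyContinuousOnInterval_integral hm) (n + 1)).const_mul ((n + 1)! : ℝ)⁻¹
  rw [integral_eq_sub_of_ae_hasDerivAt hF, intervalIntegral.integral_same]
  · field_simp
    simp
  filter_upwards [hm.ae_hasDerivAt_integral] with x hx hxab
  convert! ((hx hxab a left_mem_uIcc).pow (n + 1)).const_mul ((n + 1)! : ℝ)⁻¹ using 1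
  rw [Nat.factorial_succ, Nat.add_sub_cancel]
  push_cast
  field_simp

lemma norm_sq_eq_add_integral_inner {E : Type*} [NormedAddCommGroup E] [InnerProductSpace ℝ E]
    [CompleteSpace E] {F f : ℝ → E} {c : E} (hf : IntervalIntegrable f volume a b)
    (hF : ∀ t ∈ uIcc a b, F t = c + ∫ s in a..t, f s) :
    ‖F b‖ ^ 2 = ‖c‖ ^ 2 + ∫ s in a..b, 2 * inner ℝ (F s) (f s) := by
  set G : ℝ → E := fun t => c + ∫ s in a..t, f s with hG
  have hGac : AbsolutelyContinuousOnInterval (fun t => ‖G t‖) a b :=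
    absolutelyContinuousOnInterval_of_dist_le (absolutelyContinuousOnInterval_integral hf)
      fun x _ y _ => (dist_norm_norm_le _ _).trans_eq (by simp [hG, dist_eq_norm])
  have hderiv : ∀ᵐ x, x ∈ uIcc a b →
      HasDerivAt (fun t => ‖G t‖ ^ 2) (2 * inner ℝ (G x) (f x)) x := by
    filter_upwards [hf.ae_hasDerivAt_integral] with x hx hxab
    exact ((hx hxab a left_mem_uIcc).const_add c).norm_sq
  have hint : ∫ s in a..b, 2 * inner ℝ (F s) (f s) = ∫ s in a..b, 2 * inner ℝ (G s) (f s) :=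
    intervalIntegral.integral_congr fun s hs => by simp only [hF s hs, hG]
  rw [hint, integral_eq_sub_of_ae_hasDerivAt (absolutelyContinuousOnInterval_pow_s16 hGac 2) hderiv,
    hF b right_mem_uIcc]
  simp [hG]

end AbsolutelyContinuous

lemma hasSum_integral_mul_conj {ι 𝕜 : Type*} [Countable ι] [RCLike 𝕜] {g : ℝ → 𝕜}
    {D : ι → ℝ → 𝕜} {u : ι → ℝ} {a b : ℝ}
    (hg : IntervalIntegrable g volume a b) (hD : ∀ n, ContinuousOn (D n) (uIcc a b))
    (hu : Summable u) (hDu : ∀ n, ∀ t ∈ uIcc a b, ‖D n t‖ ≤ u n) :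
    HasSum (fun n => ∫ s in a..b, g s * conj (D n s)) (∫ s in a..b, g s * conj (∑' n, D n s)) := by
  refine intervalIntegral.hasSum_integral_of_dominated_convergence (fun n s => ‖g s‖ * u n)
    (fun n => ?_) (fun n => .of_forall fun s hs => ?_) (.of_forall fun s _ => hu.mul_left _) ?_
    (.of_forall fun s hs => ?_)
  · exact (hg.mul_continuousOn (hD n).star).aestronglyMeasurable_restrict_uIoc
  · rw [norm_mul, RCLike.norm_conj]
    gcongr
    exact hDu n s (uIoc_subset_uIcc hs)
  · simp_rw [tsum_mul_left]
    exact hg.norm.mul_const _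
  · have hDs : Summable fun n => D n s :=
      .of_norm_bounded hu fun n => hDu n s (uIoc_subset_uIcc hs)
    exact ((RCLike.hasSum_conj' _).mpr hDs.hasSum).mul_left _

lemma div_le_tanh_of_sq_eq_one_add_sq {c s L : ℝ} (hc : 0 < c) (hcs : c ^ 2 = 1 + s ^ 2)
    (hs₀ : 0 ≤ s) (hs : s ≤ Real.sinh L) : s / c ≤ Real.tanh L := by
  rw [Real.tanh_eq_sinh_div_cosh, div_le_div_iff₀ hc (Real.cosh_pos L)]
  refine (sq_le_sq₀ (by positivity) (mul_nonneg (hs₀.trans hs) hc.le)).mp ?_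
  have hsq : s ^ 2 ≤ Real.sinh L ^ 2 := by gcongr
  calc (s * Real.cosh L) ^ 2 = s ^ 2 * Real.sinh L ^ 2 + s ^ 2 := by
        rw [mul_pow, Real.cosh_sq]; ring
    _ ≤ s ^ 2 * Real.sinh L ^ 2 + Real.sinh L ^ 2 := by gcongr
    _ = (Real.sinh L * c) ^ 2 := by rw [mul_pow, hcs]; ring

section ConjVolterra

variable {𝕜 : Type*} [RCLike 𝕜]

/-- The iterates `Vʲ 𝟙` of the conjugate-linear Volterra operator `V f(t) = ∫_a^t g conj(f)` with an
arbitrary kernel `g`, of which `Aiter` is the case `g = harmKernel`. -/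
noncomputable def conjVolterraIter (g : ℝ → 𝕜) (a : ℝ) : ℕ → ℝ → 𝕜
  | 0 => fun _ => 1
  | j + 1 => fun t => ∫ s in a..t, g s * conj (conjVolterraIter g a j s)

/-- The even part `∑ V²ʲ 𝟙` of the Neumann series of the conjugate-linear Volterra operator `V`,
which plays the role of the hyperbolic cosine of `∫ g`. -/
noncomputable def conjVolterraCosh (g : ℝ → 𝕜) (a t : ℝ) : 𝕜 :=
  ∑' j, conjVolterraIter g a (2 * j) t

/-- The odd part `∑ V²ʲ⁺¹ 𝟙` of the Neumann series of the conjugate-linear Volterra operator `V`,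
which plays the role of the hyperbolic sine of `∫ g`. -/
noncomputable def conjVolterraSinh (g : ℝ → 𝕜) (a t : ℝ) : 𝕜 :=
  ∑' j, conjVolterraIter g a (2 * j + 1) t

lemma conjVolterraIter_neg (g : ℝ → 𝕜) (a : ℝ) (j : ℕ) (t : ℝ) :
    conjVolterraIter (-g) a j t = (-1) ^ j * conjVolterraIter g a j t := by
  induction j generalizing t with
  | zero => simp [conjVolterraIter]
  | succ j ih =>
    simp only [conjVolterraIter, ih, ← intervalIntegral.integral_const_mul]
    congr with s
    simp only [Pi.neg_apply, map_mul, map_pow, map_neg, map_one]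
    ring

lemma conjVolterraCosh_neg (g : ℝ → 𝕜) (a t : ℝ) :
    conjVolterraCosh (-g) a t = conjVolterraCosh g a t := by
  simp [conjVolterraCosh, conjVolterraIter_neg]

lemma conjVolterraSinh_neg (g : ℝ → 𝕜) (a t : ℝ) :
    conjVolterraSinh (-g) a t = -conjVolterraSinh g a t := by
  simp [conjVolterraSinh, conjVolterraIter_neg, pow_succ, tsum_neg]

variable {g : ℝ → 𝕜} {a b : ℝ}

lemma continuousOn_conjVolterraIter (hg : IntervalIntegrable g volume a b) (j : ℕ) :
    ContinuousOn (conjVolterraIter g a j) (uIcc a b) := by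
  induction j with
  | zero => exact continuousOn_const
  | succ j ih =>
    exact intervalIntegral.continuousOn_primitive_interval' (hg.mul_continuousOn ih.star)
      left_mem_uIcc

lemma norm_conjVolterraIter_le (hg : IntervalIntegrable g volume a b) (j : ℕ) {t : ℝ}
    (ht : t ∈ Icc a b) : ‖conjVolterraIter g a j t‖ ≤ (∫ s in a..t, ‖g s‖) ^ j / j ! := by
  induction j generalizing t with
  | zero => simp [conjVolterraIter]
  | succ j ih =>
    have hgt : IntervalIntegrable g volume a t :=
      hg.mono_set (uIcc_subset_uIcc_left (Icc_subset_uIcc ht))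
    have hprim : ContinuousOn (fun s => ∫ u in a..s, ‖g u‖) (uIcc a t) :=
      intervalIntegral.continuousOn_primitive_interval' hgt.norm left_mem_uIcc
    rw [← integral_mul_integral_pow_div_factorial hgt.norm j]
    refine intervalIntegral.norm_integral_le_of_norm_le ht.1 (.of_forall fun s hs => ?_)
      (hgt.norm.mul_continuousOn ((hprim.pow j).div_const _))
    rw [norm_mul, RCLike.norm_conj]
    gcongr
    exact ih ⟨hs.1.le, hs.2.trans ht.2⟩

lemma norm_conjVolterraIter_le_of_mem_uIcc (hab : a ≤ b) (hg : IntervalIntegrable g volume a b)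
    (j : ℕ) {t : ℝ} (ht : t ∈ uIcc a b) :
    ‖conjVolterraIter g a j t‖ ≤ (∫ s in a..b, ‖g s‖) ^ j / j ! := by
  rw [uIcc_of_le hab] at ht
  refine (norm_conjVolterraIter_le hg j ht).trans ?_
  gcongr
  · exact intervalIntegral.integral_nonneg ht.1 fun _ _ => norm_nonneg _
  · exact intervalIntegral.integral_mono_interval le_rfl ht.1 ht.2
      (.of_forall fun _ => norm_nonneg _) hg.norm

lemma summable_conjVolterraIter_even (hab : a ≤ b) (hg : IntervalIntegrable g volume a b) :
    Summable fun j => conjVolterraIter g a (2 * j) b :=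
  .of_norm_bounded (Real.hasSum_cosh _).summable fun j =>
    norm_conjVolterraIter_le_of_mem_uIcc hab hg (2 * j) right_mem_uIcc

lemma summable_conjVolterraIter_odd (hab : a ≤ b) (hg : IntervalIntegrable g volume a b) :
    Summable fun j => conjVolterraIter g a (2 * j + 1) b :=
  .of_norm_bounded (Real.hasSum_sinh _).summable fun j =>
    norm_conjVolterraIter_le_of_mem_uIcc hab hg (2 * j + 1) right_mem_uIcc

lemma tsum_conjVolterraIter (hab : a ≤ b) (hg : IntervalIntegrable g volume a b) :
    ∑' j, conjVolterraIter g a j b = conjVolterraCosh g a b + conjVolterraSinh g a b :=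
  (tsum_even_add_odd (f := fun j => conjVolterraIter g a j b)
    (summable_conjVolterraIter_even hab hg) (summable_conjVolterraIter_odd hab hg)).symm

lemma continuousOn_conjVolterraCosh (hab : a ≤ b) (hg : IntervalIntegrable g volume a b) :
    ContinuousOn (conjVolterraCosh g a) (uIcc a b) :=
  continuousOn_tsum (fun j => continuousOn_conjVolterraIter hg (2 * j))
    (Real.hasSum_cosh _).summable
    fun j _ => norm_conjVolterraIter_le_of_mem_uIcc hab hg (2 * j)

lemma continuousOn_conjVolterraSinh (hab : a ≤ b) (hg : IntervalIntegrable g volume a b) :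
    ContinuousOn (conjVolterraSinh g a) (uIcc a b) :=
  continuousOn_tsum (fun j => continuousOn_conjVolterraIter hg (2 * j + 1))
    (Real.hasSum_sinh _).summable
    fun j _ => norm_conjVolterraIter_le_of_mem_uIcc hab hg (2 * j + 1)

lemma conjVolterraSinh_eq_integral (hab : a ≤ b) (hg : IntervalIntegrable g volume a b) :
    conjVolterraSinh g a b = ∫ s in a..b, g s * conj (conjVolterraCosh g a s) :=
  (hasSum_integral_mul_conj hg (fun j => continuousOn_conjVolterraIter hg (2 * j))
    (Real.hasSum_cosh _).summable
    fun j _ => norm_conjVolterraIter_le_of_mem_uIcc hab hg (2 * j)).tsum_eq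

lemma conjVolterraCosh_eq_one_add_integral (hab : a ≤ b) (hg : IntervalIntegrable g volume a b) :
    conjVolterraCosh g a b = 1 + ∫ s in a..b, g s * conj (conjVolterraSinh g a s) := by
  rw [conjVolterraCosh, (summable_conjVolterraIter_even hab hg).tsum_eq_zero_add]
  congr 1
  exact (hasSum_integral_mul_conj hg (fun j => continuousOn_conjVolterraIter hg (2 * j + 1))
    (Real.hasSum_sinh _).summable
    fun j _ => norm_conjVolterraIter_le_of_mem_uIcc hab hg (2 * j + 1)).tsum_eq

lemma norm_sq_conjVolterraCosh (hab : a ≤ b) (hg : IntervalIntegrable g volume a b) :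
    ‖conjVolterraCosh g a b‖ ^ 2 = 1 + ‖conjVolterraSinh g a b‖ ^ 2 := by
  have hg_left : ∀ t ∈ uIcc a b, a ≤ t ∧ IntervalIntegrable g volume a t := fun t ht =>
    ⟨(uIcc_of_le hab ▸ ht).1, hg.mono_set (uIcc_subset_uIcc_left ht)⟩
  have hcosh := norm_sq_eq_add_integral_inner
    (hg.mul_continuousOn (continuousOn_conjVolterraSinh hab hg).star)
    fun t ht => conjVolterraCosh_eq_one_add_integral (hg_left t ht).1 (hg_left t ht).2
  have hsinh := norm_sq_eq_add_integral_inner (c := 0)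
    (hg.mul_continuousOn (continuousOn_conjVolterraCosh hab hg).star)
    fun t ht => (conjVolterraSinh_eq_integral (hg_left t ht).1 (hg_left t ht).2).trans
      (zero_add _).symm
  -- Both `⟪C, g S̄⟫` and `⟪S, g C̄⟫` are the real part of `g C̄ S̄`.
  have hinner (s : ℝ) :
      inner ℝ (conjVolterraCosh g a s) (g s * conj (conjVolterraSinh g a s)) =
        inner ℝ (conjVolterraSinh g a s) (g s * conj (conjVolterraCosh g a s)) := by
    simp only [real_inner_eq_re_inner 𝕜, RCLike.inner_apply]
    congr 1
    ring
  rw [hcosh, hsinh]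
  simp [hinner]

lemma norm_conjVolterraSinh_le (hab : a ≤ b) (hg : IntervalIntegrable g volume a b) :
    ‖conjVolterraSinh g a b‖ ≤ Real.sinh (∫ s in a..b, ‖g s‖) :=
  tsum_of_norm_bounded (Real.hasSum_sinh _) fun j =>
    norm_conjVolterraIter_le_of_mem_uIcc hab hg (2 * j + 1) right_mem_uIcc

lemma conjVolterraCosh_ne_zero (hab : a ≤ b) (hg : IntervalIntegrable g volume a b) :
    conjVolterraCosh g a b ≠ 0 := by
  have hpos : 0 < ‖conjVolterraCosh g a b‖ ^ 2 := by
    rw [norm_sq_conjVolterraCosh hab hg]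
    positivity
  exact norm_ne_zero_iff.mp (pow_ne_zero_iff two_ne_zero |>.mp hpos.ne')

lemma norm_conjVolterraSinh_div_conjVolterraCosh_le_tanh (hab : a ≤ b)
    (hg : IntervalIntegrable g volume a b) :
    ‖conjVolterraSinh g a b / conjVolterraCosh g a b‖ ≤ Real.tanh (∫ s in a..b, ‖g s‖) := by
  rw [norm_div]
  exact div_le_tanh_of_sq_eq_one_add_sq (norm_pos_iff.mpr (conjVolterraCosh_ne_zero hab hg))
    (norm_sq_conjVolterraCosh hab hg) (norm_nonneg _) (norm_conjVolterraSinh_le hab hg)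

end ConjVolterra

/-- The kernel `α(s) e^{2i(s−x0)ω}` of the operator `A_ω`. -/
noncomputable def harmKernel (x0 : ℝ) (α : ℝ → ℝ) (ω : ℂ) (s : ℝ) : ℂ :=
  α s * Complex.exp (2 * Complex.I * (s - x0) * ω)

lemma norm_harmKernel (x0 : ℝ) (α : ℝ → ℝ) (ω : ℂ) (s : ℝ) :
    ‖harmKernel x0 α ω s‖ = |α s| * Real.exp (-(2 * (s - x0) * ω.im)) := by
  simp [harmKernel, Complex.norm_exp]

lemma harmKernel_neg (x0 : ℝ) (α : ℝ → ℝ) (ω : ℂ) :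
    harmKernel x0 (fun s => -α s) ω = -harmKernel x0 α ω := by
  ext s
  simp [harmKernel]

lemma intervalIntegrable_harmKernel {x0 y : ℝ} {α : ℝ → ℝ}
    (hα : IntervalIntegrable α volume x0 y) (ω : ℂ) :
    IntervalIntegrable (harmKernel x0 α ω) volume x0 y :=
  IntervalIntegrable.mul_continuousOn ⟨hα.1.ofReal, hα.2.ofReal⟩ (by fun_prop)

lemma Aiter_eq_conjVolterraIter (x0 : ℝ) (α : ℝ → ℝ) (ω : ℂ) (j : ℕ) :
    Aiter x0 α ω j = conjVolterraIter (harmKernel x0 α ω) x0 j := by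
  induction j with
  | zero => rfl
  | succ j ih => simp only [Aiter, conjVolterraIter, harmKernel, ih]

section HarmE

variable {x0 y : ℝ} {α : ℝ → ℝ}

lemma harmE_eq_cosh_add_sinh (hxy : x0 ≤ y) (hα : IntervalIntegrable α volume x0 y) (ω : ℂ) :
    harmE x0 y α ω = conjVolterraCosh (harmKernel x0 α ω) x0 y +
      conjVolterraSinh (harmKernel x0 α ω) x0 y := by
  simp only [harmE, Aiter_eq_conjVolterraIter]
  exact tsum_conjVolterraIter hxy (intervalIntegrable_harmKernel hα ω)

lemma harmE_neg_eq_cosh_sub_sinh (hxy : x0 ≤ y) (hα : IntervalIntegrable α volume x0 y) (ω : ℂ) :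
    harmE x0 y (fun s => -α s) ω = conjVolterraCosh (harmKernel x0 α ω) x0 y -
      conjVolterraSinh (harmKernel x0 α ω) x0 y := by
  rw [harmE_eq_cosh_add_sinh (α := fun s => -α s) hxy hα.neg, harmKernel_neg, conjVolterraCosh_neg,
    conjVolterraSinh_neg, sub_eq_add_neg]

theorem hyperbolic_tangent_bound_general (hxy : x0 ≤ y) (hα : IntegrableOn α (Ioo x0 y)) (ω : ℂ) :
    harmE x0 y α ω + harmE x0 y (fun s => -α s) ω ≠ 0 ∧
    ‖(harmE x0 y α ω - harmE x0 y (fun s => -α s) ω)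
        / (harmE x0 y α ω + harmE x0 y (fun s => -α s) ω)‖
      ≤ Real.tanh (∫ s in x0..y, |α s| * Real.exp (-(2 * (s - x0) * ω.im))) := by
  have hα' := (intervalIntegrable_iff_integrableOn_Ioo_of_le hxy).mpr hα
  have hK := intervalIntegrable_harmKernel hα' ω
  rw [harmE_eq_cosh_add_sinh hxy hα', harmE_neg_eq_cosh_sub_sinh hxy hα', add_add_sub_cancel,
    add_sub_sub_cancel, ← two_mul, ← two_mul, mul_div_mul_left _ _ two_ne_zero]
  refine ⟨mul_ne_zero two_ne_zero (conjVolterraCosh_ne_zero hxy hK), ?_⟩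
  simpa only [norm_harmKernel] using norm_conjVolterraSinh_div_conjVolterraCosh_le_tanh hxy hK

end HarmE

/-- Theorem (thm-hyperbolic)(ii): the hyperbolic tangent operator
`Th_α^{(x0,y)} = (E_α − E_{−α})/(E_α + E_{−α})` is well defined (nonzero denominator)
and satisfies `|Th_α^{(x0,y)}(ω)| ≤ tanh(∫_{x0}^y |α|)` for every real `ω`. -/
theorem hyperbolic_tangent_bound
    (x0 x1 y : ℝ) (hx : x0 < x1) (hy : y ∈ Set.Ioc x0 x1)
    (α : ℝ → ℝ) (hα : IntegrableOn α (Set.Ioo x0 x1)) :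
    ∀ ω : ℝ,
      harmE x0 y α (ω : ℂ) + harmE x0 y (fun s => -α s) (ω : ℂ) ≠ 0 ∧
      ‖(harmE x0 y α (ω : ℂ) - harmE x0 y (fun s => -α s) (ω : ℂ))
          / (harmE x0 y α (ω : ℂ) + harmE x0 y (fun s => -α s) (ω : ℂ))‖
        ≤ Real.tanh (∫ s in x0..y, |α s|) := by
  intro ω
  simpa using hyperbolic_tangent_bound_general hy.1.le
    (hα.mono_set (Ioo_subset_Ioo_right hy.2)) (ω : ℂ)
end
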